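/- Let n ≥ 1. Then the following identity of polynomials in ℚ[t] holds: n! · Σ_{π ∈ 𝔦_n} t^{pk(π)+1} = Σ_{k=1, k ≡ n (mod 2)}^{n} c_{n,k} (1−t)^{(n−k)/2} P_k^{pk}(t), where P_m^{pk}(t) = Σ_{π ∈ S_m} t^{pk(π)+1} and c_{n,k} is the number of permutations π of [n] such that no cycle of π has length divisible by 4 and π² has exactly k cycles (counting fixed points as cycles of length 1). (Moreover c_{n,k} = 0 unless k ≡ n (mod 2), so the exponents (n−k)/2 appearing are nonnegative integers.) -/

import Mathlib

open scoped Classical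

noncomputable section

def oneLine (n : ℕ) (π : Equiv.Perm (Fin n)) (i : ℕ) : ℕ :=
  if h : 1 ≤ i ∧ i ≤ n then (π ⟨i - 1, by omega⟩).val + 1 else 0

def des (n : ℕ) (π : Equiv.Perm (Fin n)) : ℕ :=
  ((Finset.Icc 1 (n - 1)).filter fun i => oneLine n π (i + 1) < oneLine n π i).card

def pk (n : ℕ) (π : Equiv.Perm (Fin n)) : ℕ :=
  ((Finset.Icc 2 (n - 1)).filter fun i =>
    oneLine n π (i - 1) < oneLine n π i ∧ oneLine n π (i + 1) < oneLine n π i).card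

def lpk (n : ℕ) (π : Equiv.Perm (Fin n)) : ℕ :=
  ((Finset.Icc 1 (n - 1)).filter fun i =>
    oneLine n π (i - 1) < oneLine n π i ∧ oneLine n π (i + 1) < oneLine n π i).card

def pval (n : ℕ) (π : Equiv.Perm (Fin n)) : ℕ :=
  ((Finset.Icc 2 (n - 1)).filter fun i =>
    oneLine n π i < oneLine n π (i - 1) ∧ oneLine n π i < oneLine n π (i + 1)).card

def udr (n : ℕ) (π : Equiv.Perm (Fin n)) : ℕ := lpk n π + pval n π + 1

def fullCycleType (n : ℕ) (π : Equiv.Perm (Fin n)) : Multiset ℕ :=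
  π.cycleType + Multiset.replicate (n - π.support.card) 1

def numCycles (n : ℕ) (π : Equiv.Perm (Fin n)) : ℕ := Multiset.card (fullCycleType n π)

def numOddCycles (n : ℕ) (π : Equiv.Perm (Fin n)) : ℕ :=
  Multiset.card ((fullCycleType n π).filter fun p => p % 2 = 1)

def IsCyclicPerm (n : ℕ) (π : Equiv.Perm (Fin n)) : Prop :=
  fullCycleType n π = {n}

def cyclicSet (n : ℕ) : Finset (Equiv.Perm (Fin n)) :=
  Finset.univ.filter fun π => IsCyclicPerm n π

def invSet (n : ℕ) : Finset (Equiv.Perm (Fin n)) :=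
  Finset.univ.filter fun π => π ^ 2 = 1

def eulerianA (m : ℕ) : Polynomial ℚ :=
  ∑ π : Equiv.Perm (Fin m), Polynomial.X ^ (des m π + 1)

def peakP (m : ℕ) : Polynomial ℚ :=
  ∑ π : Equiv.Perm (Fin m), Polynomial.X ^ (pk m π + 1)

def leftPeakP (m : ℕ) : Polynomial ℚ :=
  ∑ π : Equiv.Perm (Fin m), Polynomial.X ^ (lpk m π)

def cnk (n k : ℕ) : ℕ :=
  (Finset.univ.filter fun π : Equiv.Perm (Fin n) =>
    (∀ p ∈ fullCycleType n π, ¬ (4 ∣ p)) ∧ numCycles n (π ^ 2) = k).card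

def bnk (n k : ℕ) : ℕ :=
  (Finset.univ.filter fun π : Equiv.Perm (Fin n) => numCycles n (π ^ 2) = k).card

def dnk (n k : ℕ) : ℕ :=
  (Finset.univ.filter fun π : Equiv.Perm (Fin n) => numOddCycles n (π ^ 2) = k).card

/-!
Fix an alphabet whose letters carry signs `±1` with sum zero. The words compatible with a
permutation `π` are the enriched `P`-partitions of Stembridge. For `2 m` letters with alternating
signs their number depends only on `pk π`: summed against `X ^ m` it gives
`(1 / 2) * ((1 + X) / (1 - X)) ^ (n + 1) * T ^ (pk π + 1)` with `T = 4 * X / (1 + X) ^ 2`. As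
`1 - T = ((1 - X) / (1 + X)) ^ 2` and `T` is transcendental over `ℚ`, the theorem amounts to the
identity obtained from it by replacing `t ^ (pk π + 1)` by the number of words compatible with `π`
and dropping the powers of `1 - t`.

In that identity the inner sum on the right is `(2 * m) ^ k`, because every word is compatible with
exactly one permutation after sorting. On the left, an involution with a compatible word is encoded
by a multiset of pairs of letters that is invariant under swapping and contains pairs of opposite
signs at most once. Hence the generating function is a product of factors `1 + X ^ d` and
`1 / (1 - X ^ d)`. Its logarithmic derivative has coefficients `0` for `4 ∣ k` and
`(2 * m) ^ gcd k 2` otherwise, so the exponential formula turns it into a sum over the permutations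
without cycles of length divisible by `4`; and squaring splits a `k`-cycle into `gcd k 2` cycles.
-/

section Enumerations

open Finset

variable {n : ℕ} {α β : Type*}

lemma count_map_univ_le_one_iff [DecidableEq β] {p : Fin n → β} {x : β} :
    (univ.val.map p).count x ≤ 1 ↔ ∀ i j, i < j → p i = x → p j ≠ x := by
  rw [Multiset.count_map, ← filter_val, card_val, card_le_one]
  simp only [mem_filter_univ]
  grind

theorem existsUnique_monotone_map_univ_eq [LinearOrder α] {κ : β → α} (hκ : Function.Injective κ)
    {s : Multiset β} (hs : Multiset.card s = n) :
    ∃! p : Fin n → β, univ.val.map p = s ∧ Monotone (κ ∘ p) := by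
  obtain ⟨q, rfl⟩ : ∃ q : Fin n → β, univ.val.map q = s := by
    subst hs
    exact ⟨fun i => s.toList.get (i.cast s.length_toList.symm), by
      rw [Fin.univ_val_map, ← List.ofFn_congr s.length_toList, List.ofFn_get, Multiset.coe_toList]⟩
  refine ⟨q ∘ Tuple.sort (κ ∘ q), ⟨?_, Tuple.monotone_sort (κ ∘ q)⟩, fun p ⟨hp, hmono⟩ => ?_⟩
  · rw [← Multiset.map_map, Multiset.map_univ_val_equiv]
  · refine hκ.comp_left (List.ofFn_injective (List.Perm.eq_of_sortedLE hmono.sortedLE_ofFn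
      (Tuple.monotone_sort (κ ∘ q)).sortedLE_ofFn ?_))
    rw [← Multiset.coe_eq_coe, ← Fin.univ_val_map, ← Fin.univ_val_map]
    change Multiset.map (κ ∘ p) _ = Multiset.map ((κ ∘ q) ∘ Tuple.sort (κ ∘ q)) _
    rw [← Multiset.map_map, hp, ← Multiset.map_map _ (Tuple.sort _), Multiset.map_univ_val_equiv,
      Multiset.map_map]

/-- The pairs of letters standing above each other when `g ∘ π` is written below `f`. -/
def biword (π : Equiv.Perm (Fin n)) (f g : Fin n → α) : Multiset (α × α) :=
  univ.val.map fun i => (f i, g (π i))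

lemma card_biword (π : Equiv.Perm (Fin n)) (f g : Fin n → α) :
    Multiset.card (biword π f g) = n := by
  simp [biword]

lemma map_swap_biword (π : Equiv.Perm (Fin n)) (f g : Fin n → α) :
    (biword π f g).map Prod.swap = biword π⁻¹ g f := by
  rw [biword, biword, Multiset.map_map]
  conv_rhs => rw [← Multiset.map_univ_val_equiv π, Multiset.map_map]
  simp

lemma map_swap_biword_self {π : Equiv.Perm (Fin n)} (hπ : π ^ 2 = 1) (f : Fin n → α) :
    (biword π f f).map Prod.swap = biword π f f := by
  have hinv : π⁻¹ = π := by rwa [← mul_eq_one_iff_inv_eq, ← sq]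
  rw [map_swap_biword, hinv]

end Enumerations

section SignedWords

open Finset

variable {n : ℕ} {α β : Type*} [LinearOrder α] [LinearOrder β] {ε : α → ℤˣ}

/-- Sort key comparing pairs lexicographically, except that behind a letter `a` with `ε a = -1` the
order of the second coordinate is reversed; the two copies of `β` keep the orders apart. -/
def signedKey (ε : α → ℤˣ) (a : α) (b : β) : α ×ₗ (βᵒᵈ ⊕ₗ β) :=
  toLex (a, if ε a = 1 then toLex (.inr b) else toLex (.inl (OrderDual.toDual b)))

lemma signedKey_le_signedKey {a a' : α} {b b' : β} :
    signedKey ε a b ≤ signedKey ε a' b' ↔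
      a < a' ∨ a = a' ∧ if ε a = 1 then b ≤ b' else b' ≤ b := by
  rw [signedKey, signedKey, Prod.Lex.toLex_le_toLex]
  refine or_congr_right (and_congr_right fun h => ?_)
  obtain rfl : a = a' := h
  dsimp only
  split_ifs
  · exact Sum.Lex.inr_le_inr_iff
  · exact Sum.Lex.inl_le_inl_iff

lemma signedKey_lt_signedKey {a a' : α} {b b' : β} :
    signedKey ε a b < signedKey ε a' b' ↔
      a < a' ∨ a = a' ∧ if ε a = 1 then b < b' else b' < b := by
  rw [signedKey, signedKey, Prod.Lex.toLex_lt_toLex]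
  refine or_congr_right (and_congr_right fun h => ?_)
  obtain rfl : a = a' := h
  dsimp only
  split_ifs
  · exact Sum.Lex.inr_lt_inr_iff
  · exact Sum.Lex.inl_lt_inl_iff

lemma signedKey_inj {a a' : α} {b b' : β} :
    signedKey ε a b = signedKey ε a' b' ↔ a = a' ∧ b = b' := by
  refine ⟨fun h => ?_, fun h => by rw [h.1, h.2]⟩
  have hle := signedKey_le_signedKey.1 h.le
  have hge := signedKey_le_signedKey.1 h.ge
  grind

/-- The words compatible with `π` are the enriched `P`-partitions of Stembridge for the chain `π`:
they increase weakly, with repetitions of a letter of sign `1` (resp. `-1`) only along ascents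
(resp. descents) of `π`. -/
def IsCompatible (ε : α → ℤˣ) (π : Equiv.Perm (Fin n)) (f : Fin n → α) : Prop :=
  StrictMono fun i => signedKey ε (f i) (π i)

/-- The number of words compatible with `π`. -/
def compatibleCount [Fintype α] (ε : α → ℤˣ) (π : Equiv.Perm (Fin n)) : ℕ :=
  #{f : Fin n → α | IsCompatible ε π f}

/-- The unique such `π` is the inverse of the standardization of the word `w`. -/
theorem existsUnique_isCompatible_comp (ε : α → ℤˣ) (w : Fin n → α) :
    ∃! π : Equiv.Perm (Fin n), IsCompatible ε π (w ∘ π) := by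
  have hinj : Function.Injective fun x => signedKey ε (w x) x := fun _ _ h => (signedKey_inj.1 h).2
  refine ⟨Tuple.sort _, (Tuple.monotone_sort fun x => signedKey ε (w x) x).strictMono_of_injective
    (hinj.comp (Equiv.injective _)), fun σ hσ => ?_⟩
  ext i
  exact congrArg _ <| hinj <| congrFun
    (Tuple.unique_monotone (f := fun x => signedKey ε (w x) x) (σ := σ)
      (StrictMono.monotone hσ) (Tuple.monotone_sort _)) i

theorem sum_compatibleCount [Fintype α] (n : ℕ) (ε : α → ℤˣ) :
    ∑ π : Equiv.Perm (Fin n), compatibleCount ε π = Fintype.card α ^ n := by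
  have hcomp (π : Equiv.Perm (Fin n)) :
      compatibleCount ε π = #{w : Fin n → α | IsCompatible ε π (w ∘ π)} :=
    card_equiv (π.symm.arrowCongr (.refl α)).symm fun f => by
      simp [Equiv.arrowCongr, Function.comp_assoc]
  have hone (w : Fin n → α) : #{π : Equiv.Perm (Fin n) | IsCompatible ε π (w ∘ π)} = 1 := by
    obtain ⟨π, hπ, huniq⟩ := existsUnique_isCompatible_comp ε w
    exact card_eq_one.2 ⟨π, by ext σ; simpa using ⟨huniq σ, fun h => h ▸ hπ⟩⟩
  calc ∑ π : Equiv.Perm (Fin n), compatibleCount ε π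
      = ∑ w : Fin n → α, #{π : Equiv.Perm (Fin n) | IsCompatible ε π (w ∘ π)} := by
        simp only [hcomp, card_filter]
        exact sum_comm
    _ = Fintype.card α ^ n := by simp [hone]

/-- If `π⁻¹` sorts the word `g ∘ π`, then `π i < π j` can be read off from the letters of that
word, so that compatibility of `f` becomes a condition on the biword alone. -/
theorem isCompatible_iff_of_inv {π : Equiv.Perm (Fin n)} {f g : Fin n → α}
    (hg : IsCompatible ε π⁻¹ g) :
    IsCompatible ε π f ↔
      (Monotone fun i => signedKey ε (f i) (g (π i))) ∧
        ∀ x, ε x.1 ≠ ε x.2 → (biword π f g).count x ≤ 1 := by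
  have hlt {i j : Fin n} (hij : i < j) :
      (π i < π j ↔ g (π i) < g (π j) ∨ g (π i) = g (π j) ∧ ε (g (π i)) = 1) ∧
        (π j < π i ↔ g (π j) < g (π i) ∨ g (π i) = g (π j) ∧ ε (g (π i)) ≠ 1) := by
    rw [← hg.lt_iff_lt, ← hg.lt_iff_lt, signedKey_lt_signedKey, signedKey_lt_signedKey]
    simp only [Equiv.Perm.inv_def, Equiv.symm_apply_apply]
    grind
  have hsign (a b : α) : ε a = ε b ↔ (ε a = 1 ↔ ε b = 1) := by
    rcases Int.units_eq_one_or (ε a) with ha | ha <;>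
      rcases Int.units_eq_one_or (ε b) with hb | hb <;> simp [ha, hb]
  have hcount : (∀ x, ε x.1 ≠ ε x.2 → (biword π f g).count x ≤ 1) ↔
      ∀ i j, i < j → f i = f j → g (π i) = g (π j) → ε (f i) = ε (g (π i)) := by
    simp only [biword, count_map_univ_le_one_iff]
    refine ⟨fun h i j hij hf hg => ?_, fun h x hx i j hij hi hj => ?_⟩
    · by_contra hne
      exact h (f i, g (π i)) hne i j hij rfl (by rw [hf, hg])
    · subst hi
      obtain ⟨hf, hg⟩ := Prod.mk.inj hj
      exact hx (h i j hij hf.symm hg.symm)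
  rw [monotone_iff_forall_lt, hcount, IsCompatible, StrictMono]
  simp only [signedKey_lt_signedKey, signedKey_le_signedKey, hsign, ← forall_and]
  refine forall₃_congr fun i j hij => ?_
  rw [(hlt hij).1, (hlt hij).2]
  grind

lemma IsCompatible.count_biword_self_le_one {π : Equiv.Perm (Fin n)} {f : Fin n → α}
    (hf : IsCompatible ε π f) (hπ : π ^ 2 = 1) (x : α × α) (hx : ε x.1 ≠ ε x.2) :
    (biword π f f).count x ≤ 1 := by
  have hinv : π⁻¹ = π := by rwa [← mul_eq_one_iff_inv_eq, ← sq]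
  exact ((isCompatible_iff_of_inv (by rwa [hinv])).1 hf).2 x hx

theorem existsUnique_biword_eq {s : Multiset (α × α)} (hs : Multiset.card s = n)
    (hmixed : ∀ x, ε x.1 ≠ ε x.2 → s.count x ≤ 1) :
    ∃! t : Equiv.Perm (Fin n) × (Fin n → α) × (Fin n → α),
      IsCompatible ε t.1 t.2.1 ∧ IsCompatible ε t.1⁻¹ t.2.2 ∧ biword t.1 t.2.1 t.2.2 = s := by
  have hinj : Function.Injective fun x : α × α => signedKey ε x.1 x.2 :=
    fun _ _ h => Prod.ext_iff.2 (signedKey_inj.1 h)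
  obtain ⟨p, ⟨rfl, hp⟩, huniq⟩ := existsUnique_monotone_map_univ_eq hinj hs
  obtain ⟨σ, hσ, hσuniq⟩ := existsUnique_isCompatible_comp ε (Prod.snd ∘ p)
  have hbiword : biword σ⁻¹ (Prod.fst ∘ p) ((Prod.snd ∘ p) ∘ σ) = univ.val.map p := by simp [biword]
  refine ⟨(σ⁻¹, Prod.fst ∘ p, (Prod.snd ∘ p) ∘ σ), ⟨?_, by simpa using hσ, hbiword⟩, ?_⟩
  · refine (isCompatible_iff_of_inv (by simpa using hσ)).2 ⟨?_, hbiword ▸ hmixed⟩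
    simpa [Function.comp_def] using hp
  · rintro ⟨π, f, g⟩ ⟨hf, hg, hfg⟩
    obtain rfl : (fun i => (f i, g (π i))) = p :=
      huniq _ ⟨hfg, ((isCompatible_iff_of_inv hg).1 hf).1⟩
    obtain rfl : π⁻¹ = σ := hσuniq π⁻¹ (by simpa [Function.comp_def] using hg)
    simp [Function.comp_def]

theorem existsUnique_biword_self_eq {s : Multiset (α × α)} (hs : Multiset.card s = n)
    (hswap : s.map Prod.swap = s) (hmixed : ∀ x, ε x.1 ≠ ε x.2 → s.count x ≤ 1) :
    ∃! t : Equiv.Perm (Fin n) × (Fin n → α),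
      t.1 ^ 2 = 1 ∧ IsCompatible ε t.1 t.2 ∧ biword t.1 t.2 t.2 = s := by
  obtain ⟨⟨π, f, g⟩, ⟨hf, hg, rfl⟩, huniq⟩ := existsUnique_biword_eq hs hmixed
  obtain ⟨hπ, rfl, -⟩ : π⁻¹ = π ∧ g = f ∧ f = g := by
    simpa using huniq (π⁻¹, g, f) ⟨hg, by simpa using hf, by rw [← map_swap_biword, hswap]⟩
  refine ⟨(π, g), ⟨by rw [sq, mul_eq_one_iff_inv_eq, hπ], hf, rfl⟩, ?_⟩
  rintro ⟨σ, f⟩ ⟨hσ, hf', hbiword⟩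
  have hinv : σ⁻¹ = σ := by rwa [← mul_eq_one_iff_inv_eq, ← sq]
  simpa using huniq (σ, f, f) ⟨hf', hinv.symm ▸ hf', hbiword⟩

end SignedWords

section SymmetricBiwords

open Finset

variable {n : ℕ} {α : Type*} [Fintype α] [DecidableEq α]

/-- The number of ordered pairs `(a, b)` representing `z`: `1` on the diagonal, `2` off it. -/
def orderedCount (z : Sym2 α) : ℕ := #{p : α × α | s(p.1, p.2) = z}

/-- The common value of `ε a * ε b` on the two representatives `(a, b)` of an unordered pair. -/
def pairSign (ε : α → ℤˣ) (z : Sym2 α) : ℤˣ :=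
  Sym2.lift ⟨fun a b => ε a * ε b, fun a b => mul_comm (ε a) (ε b)⟩ z

/-- `k` is a possible total multiplicity of the representatives of `z` in a multiset of ordered
pairs that is invariant under swapping and contains pairs of letters of opposite sign at most
once. -/
def IsPairMultiplicity (ε : α → ℤˣ) (z : Sym2 α) (k : ℕ) : Prop :=
  orderedCount z ∣ k ∧ (pairSign ε z = -1 → k ≤ orderedCount z)

lemma orderedCount_pos (z : Sym2 α) : 0 < orderedCount z := by
  induction z with
  | _ a b => exact card_pos.2 ⟨(a, b), by simp⟩

lemma pairSign_mk_eq_neg_one_iff {α : Type*} {ε : α → ℤˣ} {a b : α} :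
    pairSign ε s(a, b) = -1 ↔ ε a ≠ ε b := by
  rcases Int.units_eq_one_or (ε a) with ha | ha <;>
    rcases Int.units_eq_one_or (ε b) with hb | hb <;> simp [pairSign, ha, hb]

/-- Total multiplicities of the unordered pairs. -/
def pairCounts (s : Multiset (α × α)) : Sym2 α →₀ ℕ :=
  (s.map fun p => s(p.1, p.2)).toFinsupp

lemma pairCounts_mk {s : Multiset (α × α)} (hs : s.map Prod.swap = s) (p : α × α) :
    pairCounts s s(p.1, p.2) = orderedCount s(p.1, p.2) * s.count p := by
  have hcount (q : α × α) (hq : s(q.1, q.2) = s(p.1, p.2)) : s.count q = s.count p := by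
    rcases Sym2.mk_eq_mk_iff.1 hq with rfl | rfl
    · rfl
    · rw [← Multiset.count_map_eq_count' Prod.swap s Prod.swap_injective, hs, Prod.swap_swap]
  calc pairCounts s s(p.1, p.2)
      = Multiset.card (s.filter fun q => s(p.1, p.2) = s(q.1, q.2)) := by
        rw [pairCounts, Multiset.toFinsupp_apply, Multiset.count_map]
    _ = ∑ q : α × α with s(q.1, q.2) = s(p.1, p.2), s.count q := by
        rw [← Multiset.sum_count_eq_card (s := univ.filter fun q => s(q.1, q.2) = s(p.1, p.2))
          (by simp +contextual [eq_comm])]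
        refine sum_congr rfl fun q hq => ?_
        rw [Multiset.count_filter, if_pos (mem_filter.1 hq).2.symm]
    _ = orderedCount s(p.1, p.2) * s.count p := by
        rw [sum_congr rfl fun q hq => hcount q (mem_filter.1 hq).2, sum_const, smul_eq_mul,
          orderedCount]

lemma pairCounts_mem_finsuppAntidiag {s : Multiset (α × α)} :
    pairCounts s ∈ finsuppAntidiag univ (Multiset.card s) := by
  refine mem_finsuppAntidiag'.2 ⟨?_, subset_univ _⟩
  exact (Multiset.toFinsupp_sum_eq _).trans (Multiset.card_map _ s)

lemma pairCounts_injOn {α : Type*} [Finite α] [DecidableEq α] :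
    Set.InjOn pairCounts {s : Multiset (α × α) | s.map Prod.swap = s} := by
  intro s hs t ht hst
  have := Fintype.ofFinite α
  ext p
  have hp := DFunLike.congr_fun hst s(p.1, p.2)
  rw [pairCounts_mk hs, pairCounts_mk ht] at hp
  exact Nat.eq_of_mul_eq_mul_left (orderedCount_pos _) hp

lemma isPairMultiplicity_pairCounts_iff {ε : α → ℤˣ} {s : Multiset (α × α)}
    (hs : s.map Prod.swap = s) :
    (∀ z, IsPairMultiplicity ε z (pairCounts s z)) ↔
      ∀ p : α × α, ε p.1 ≠ ε p.2 → s.count p ≤ 1 := by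
  have hiff (p : α × α) : IsPairMultiplicity ε s(p.1, p.2) (pairCounts s s(p.1, p.2)) ↔
      (ε p.1 ≠ ε p.2 → s.count p ≤ 1) := by
    rw [IsPairMultiplicity, pairCounts_mk hs, pairSign_mk_eq_neg_one_iff,
      mul_le_iff_le_one_right (orderedCount_pos _)]
    simp
  exact ⟨fun h p => (hiff p).1 (h _), fun h z => z.ind fun a b => (hiff (a, b)).2 (h (a, b))⟩

lemma exists_pairCounts_eq (l : Sym2 α →₀ ℕ) (hl : ∀ z, orderedCount z ∣ l z) :
    ∃ s : Multiset (α × α), s.map Prod.swap = s ∧ pairCounts s = l := by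
  let m : α × α →₀ ℕ :=
    Finsupp.equivFunOnFinite.symm fun p => l s(p.1, p.2) / orderedCount s(p.1, p.2)
  have hm (p : α × α) : m.toMultiset.count p = l s(p.1, p.2) / orderedCount s(p.1, p.2) :=
    Finsupp.count_toMultiset m p
  have hswap : m.toMultiset.map Prod.swap = m.toMultiset := by
    ext p
    rw [← p.swap_swap, Multiset.count_map_eq_count' _ _ Prod.swap_injective, hm, hm]
    simp only [Prod.fst_swap, Prod.snd_swap, Sym2.eq_swap]
  refine ⟨m.toMultiset, hswap, Finsupp.ext fun z => z.ind fun a b => ?_⟩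
  rw [pairCounts_mk hswap (a, b), hm, Nat.mul_div_cancel' (hl _)]

theorem sum_invSet_compatibleCount {α : Type*} [Fintype α] [LinearOrder α] (n : ℕ) (ε : α → ℤˣ) :
    ∑ π ∈ invSet n, compatibleCount ε π =
      #{l ∈ finsuppAntidiag (univ : Finset (Sym2 α)) n | ∀ z, IsPairMultiplicity ε z (l z)} := by
  have hmem (t : Equiv.Perm (Fin n) × (Fin n → α)) :
      t ∈ (invSet n ×ˢ univ).filter (fun t => IsCompatible ε t.1 t.2) ↔
        t.1 ^ 2 = 1 ∧ IsCompatible ε t.1 t.2 := by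
    simp [invSet]
  calc ∑ π ∈ invSet n, compatibleCount ε π
      = #((invSet n ×ˢ univ).filter fun t => IsCompatible ε t.1 t.2) := by
        rw [card_filter, sum_product]
        exact sum_congr rfl fun π _ => by rw [compatibleCount, card_filter]
    _ = _ := card_bij (fun t _ => pairCounts (biword t.1 t.2 t.2)) ?_ ?_ ?_
  · intro t ht
    obtain ⟨hπ, hf⟩ := (hmem t).1 ht
    refine mem_filter.2 ⟨?_, (isPairMultiplicity_pairCounts_iff (map_swap_biword_self hπ _)).2
      (hf.count_biword_self_le_one hπ)⟩
    simpa only [card_biword] using pairCounts_mem_finsuppAntidiag (s := biword t.1 t.2 t.2)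
  · intro t ht u hu htu
    obtain ⟨hπ, hf⟩ := (hmem t).1 ht
    obtain ⟨hσ, hg⟩ := (hmem u).1 hu
    have hbiword := pairCounts_injOn (map_swap_biword_self hπ _) (map_swap_biword_self hσ _) htu
    exact (existsUnique_biword_self_eq (card_biword _ _ _) (map_swap_biword_self hπ _)
      (hf.count_biword_self_le_one hπ)).unique ⟨hπ, hf, rfl⟩ ⟨hσ, hg, hbiword.symm⟩
  · intro l hl
    obtain ⟨hl, hmult⟩ := mem_filter.1 hl
    obtain ⟨s, hs, rfl⟩ := exists_pairCounts_eq l fun z => (hmult z).1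
    have hcard : Multiset.card s = n := by
      rw [← (mem_finsuppAntidiag'.1 hl).1]
      exact (mem_finsuppAntidiag'.1 pairCounts_mem_finsuppAntidiag).1.symm
    obtain ⟨t, ⟨hπ, hf, rfl⟩, -⟩ :=
      existsUnique_biword_self_eq hcard hs ((isPairMultiplicity_pairCounts_iff hs).1 hmult)
    exact ⟨t, (hmem t).2 ⟨hπ, hf⟩, rfl⟩

end SymmetricBiwords

section PairSeries

open Finset hiding mk
open PowerSeries

lemma X_mul_derivative_prod {R ι : Type*} [CommRing R] {s : Finset ι} {g w : ι → R⟦X⟧}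
    (h : ∀ i ∈ s, X * d⁄dX R (g i) = w i * g i) :
    X * d⁄dX R (∏ i ∈ s, g i) = (∑ i ∈ s, w i) * ∏ i ∈ s, g i := by
  induction s using Finset.induction_on with
  | empty => simp
  | insert i s hi ih =>
    rw [prod_insert hi, sum_insert hi, Derivation.leibniz, smul_eq_mul, smul_eq_mul]
    have hi' := h i (mem_insert_self i s)
    have hs := ih fun j hj => h j (mem_insert_of_mem hj)
    linear_combination (∏ j ∈ s, g j) * hi' + g i * hs

/-- The power series `(1 - s * X ^ d)⁻ˢ`, that is, `1 + X ^ d` for `s = -1` and the geometric series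
in `X ^ d` for `s = 1`. -/
def signedGeomSeries (s : ℤˣ) (d : ℕ) : ℚ⟦X⟧ :=
  mk fun k => if d ∣ k ∧ (s = -1 → k ≤ d) then 1 else 0

/-- The coefficients of `X * g' / g` for `g = signedGeomSeries s d`. -/
def powerSumWeight (s : ℤˣ) (d k : ℕ) : ℚ :=
  if k ≠ 0 ∧ d ∣ k then d * (s : ℤ) ^ (k / d + 1) else 0

lemma one_sub_mul_mk_powerSumWeight (s : ℤˣ) {d : ℕ} (hd : 0 < d) :
    (1 - C ((s : ℤ) : ℚ) * X ^ d) * mk (powerSumWeight s d) = C (d : ℚ) * X ^ d := by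
  ext k
  have hs : ((s : ℤ) : ℚ) ^ 2 = 1 := by rcases Int.units_eq_one_or s with rfl | rfl <;> norm_num
  rw [sub_mul, one_mul, mul_assoc, map_sub, coeff_C_mul, coeff_X_pow_mul', coeff_C_mul,
    coeff_X_pow, coeff_mk]
  by_cases hdk : d ∣ k
  · obtain ⟨j, rfl⟩ := hdk
    rcases j with - | - | j
    · simp [powerSumWeight, hd.ne, hd.not_ge]
    · simp [powerSumWeight, hd.ne', Nat.div_self hd, hs]
    · have hle : d ≤ d * (j + 1 + 1) := Nat.le_mul_of_pos_right d (by omega)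
      have hsub : d * (j + 1 + 1) - d = d * (j + 1) := by rw [mul_add_one d (j + 1)]; simp
      have hne : d * (j + 1 + 1) ≠ d := by nlinarith
      rw [if_pos hle, hsub, coeff_mk, if_neg hne, powerSumWeight, powerSumWeight,
        if_pos ⟨by positivity, dvd_mul_right d _⟩, if_pos ⟨by positivity, dvd_mul_right d _⟩,
        Nat.mul_div_cancel_left _ hd, Nat.mul_div_cancel_left _ hd]
      ring
  · have hsub : d ≤ k → ¬ d ∣ k - d := fun hle h => hdk ((Nat.dvd_sub_iff_left hle dvd_rfl).1 h)
    have hne : k ≠ d := by rintro rfl; exact hdk dvd_rfl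
    simp +contextual [powerSumWeight, hdk, hsub, hne]

lemma X_mul_derivative_X_pow {R : Type*} [CommRing R] (d : ℕ) :
    X * d⁄dX R (X ^ d : R⟦X⟧) = C (d : R) * X ^ d := by
  rw [Derivation.leibniz_pow]
  rcases d with - | d
  · simp
  · simp only [add_tsub_cancel_right, derivative_X, smul_eq_mul, mul_one, nsmul_eq_mul,
      Nat.cast_add, Nat.cast_one, map_add, map_natCast, map_one]
    ring

lemma signedGeomSeries_neg_one {d : ℕ} (hd : 0 < d) :
    signedGeomSeries (-1) d = 1 + X ^ d := by
  ext k
  have hiff : d ∣ k ∧ k ≤ d ↔ k = 0 ∨ k = d :=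
    ⟨fun ⟨hdk, hk⟩ => k.eq_zero_or_pos.imp_right fun h => hk.antisymm (Nat.le_of_dvd h hdk),
      by rintro (rfl | rfl) <;> simp⟩
  rw [map_add, coeff_one, coeff_X_pow, signedGeomSeries, coeff_mk]
  simp only [forall_const, hiff]
  rcases eq_or_ne k 0 with rfl | hk
  · simp [hd.ne]
  · simp [hk]

lemma one_sub_X_pow_mul_signedGeomSeries_one {d : ℕ} (hd : 0 < d) :
    (1 - X ^ d) * signedGeomSeries 1 d = 1 := by
  ext k
  have hone : (1 : ℤˣ) ≠ -1 := by decide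
  rw [sub_mul, one_mul, map_sub, coeff_X_pow_mul', coeff_one]
  simp only [signedGeomSeries, coeff_mk, hone, false_imp_iff, and_true]
  rcases lt_or_ge k d with hk | hk
  · have hdk : d ∣ k ↔ k = 0 := ⟨(Nat.eq_zero_of_dvd_of_lt · hk), by rintro rfl; exact dvd_zero d⟩
    simp [hk.not_ge, hdk]
  · simp [hk, Nat.dvd_sub_iff_left hk dvd_rfl, (hd.trans_le hk).ne']

lemma X_mul_derivative_signedGeomSeries (s : ℤˣ) {d : ℕ} (hd : 0 < d) :
    X * d⁄dX ℚ (signedGeomSeries s d) = mk (powerSumWeight s d) * signedGeomSeries s d := by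
  have hweight := one_sub_mul_mk_powerSumWeight s hd
  have hX := X_mul_derivative_X_pow (R := ℚ) d
  rcases Int.units_eq_one_or s with rfl | rfl
  · have hgeom := one_sub_X_pow_mul_signedGeomSeries_one hd
    have hderiv := congrArg (d⁄dX ℚ) hgeom
    rw [Derivation.leibniz, map_sub, Derivation.map_one_eq_zero, smul_eq_mul, smul_eq_mul]
      at hderiv
    refine mul_left_cancel₀ (left_ne_zero_of_mul_eq_one hgeom) ?_
    simp only [Units.val_one, Int.cast_one, map_one, one_mul] at hweight
    linear_combination X * hderiv + signedGeomSeries 1 d * hX - signedGeomSeries 1 d * hweight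
  · rw [signedGeomSeries_neg_one hd, map_add, Derivation.map_one_eq_zero, zero_add, hX, ← hweight]
    simp only [Units.val_neg, Units.val_one, Int.cast_neg, Int.cast_one, map_neg, map_one, neg_mul,
      one_mul, sub_neg_eq_add]
    ring

variable {α : Type*} [Fintype α]

/-- The coefficients of `X * F' / F` for the generating function `F` of involutions with a
compatible word. -/
def pairWeight (ε : α → ℤˣ) (k : ℕ) : ℚ :=
  if k = 0 then 0
  else if Even k then (∑ a, ((ε a : ℤ) : ℚ) ^ (k / 2 + 1)) ^ 2
  else Fintype.card α

lemma pairWeight_of_sum_eq_zero {ε : α → ℤˣ} (hε : ∑ a, (ε a : ℤ) = 0) (k : ℕ) :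
    pairWeight ε k = if 4 ∣ k then 0 else (Fintype.card α : ℚ) ^ k.gcd 2 := by
  have hsq (a : α) : ((ε a : ℤ) : ℚ) ^ 2 = 1 := by
    rcases Int.units_eq_one_or (ε a) with h | h <;> simp [h]
  have heven {e : ℕ} (he : Even e) : ∑ a, ((ε a : ℤ) : ℚ) ^ e = Fintype.card α := by
    obtain ⟨j, rfl⟩ := he.two_dvd
    simp [pow_mul, hsq]
  have hodd {e : ℕ} (he : Odd e) : ∑ a, ((ε a : ℤ) : ℚ) ^ e = 0 := by
    obtain ⟨j, rfl⟩ := he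
    simp only [pow_succ, pow_mul, hsq, one_pow, one_mul]
    exact_mod_cast hε
  rw [pairWeight]
  rcases eq_or_ne k 0 with rfl | hk
  · simp
  rw [if_neg hk]
  rcases Nat.even_or_odd k with h2 | h2
  · rw [if_pos h2, Nat.gcd_eq_right h2.two_dvd]
    split_ifs with h4
    · rw [hodd (Nat.odd_iff.2 (by omega)), zero_pow two_ne_zero]
    · rw [heven (Nat.even_iff.2 (by have := h2.two_dvd; omega))]
  · have h4 : ¬ 4 ∣ k := by have := Nat.odd_iff.1 h2; omega
    rw [if_neg (Nat.not_even_iff_odd.2 h2), if_neg h4, h2.coprime_two_right.gcd_eq_one, pow_one]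

variable [DecidableEq α] (ε : α → ℤˣ)

lemma orderedCount_mk (a b : α) : orderedCount s(a, b) = if a = b then 1 else 2 := by
  have hfiber : univ.filter (fun p : α × α => s(p.1, p.2) = s(a, b)) = {(a, b), (b, a)} := by
    ext ⟨c, d⟩
    simp
  rw [orderedCount, hfiber]
  split_ifs with h
  · simp [h]
  · exact card_pair (by simp [h])

lemma coeff_prod_signedGeomSeries (n : ℕ) :
    coeff n (∏ z, signedGeomSeries (pairSign ε z) (orderedCount z)) =
      #{l ∈ finsuppAntidiag (univ : Finset (Sym2 α)) n | ∀ z, IsPairMultiplicity ε z (l z)} := by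
  rw [coeff_prod, card_filter, Nat.cast_sum]
  refine sum_congr rfl fun l _ => ?_
  have hcoeff (z : Sym2 α) : coeff (l z) (signedGeomSeries (pairSign ε z) (orderedCount z)) =
      if IsPairMultiplicity ε z (l z) then 1 else 0 :=
    (coeff_mk _ _).trans (if_congr Iff.rfl rfl rfl)
  simp [hcoeff, prod_ite_zero]

lemma sum_powerSumWeight (k : ℕ) :
    ∑ z, powerSumWeight (pairSign ε z) (orderedCount z) k = pairWeight ε k := by
  let m (z : Sym2 α) : ℚ :=
    if orderedCount z ∣ k then ((pairSign ε z : ℤ) : ℚ) ^ (k / orderedCount z + 1) else 0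
  have hone (a : α) : ((ε a : ℤ) : ℚ) * (ε a : ℤ) = 1 := by
    rcases Int.units_eq_one_or (ε a) with h | h <;> simp [h]
  rw [pairWeight]
  rcases eq_or_ne k 0 with rfl | hk
  · simp [powerSumWeight]
  rw [if_neg hk]
  calc ∑ z, powerSumWeight (pairSign ε z) (orderedCount z) k
      = ∑ z, ∑ p : α × α with s(p.1, p.2) = z, m z := by
        refine sum_congr rfl fun z _ => ?_
        rw [sum_const, nsmul_eq_mul, ← orderedCount]
        by_cases hdvd : orderedCount z ∣ k <;> simp [powerSumWeight, m, hk, hdvd]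
    _ = ∑ a, ∑ b, m s(a, b) := by rw [sum_fiberwise', Fintype.sum_prod_type]
    _ = _ := ?_
  split_ifs with heven
  · rw [sq, sum_mul_sum]
    refine sum_congr rfl fun a _ => sum_congr rfl fun b _ => ?_
    rcases eq_or_ne a b with rfl | hab
    · simp [m, orderedCount_mk, pairSign, ← mul_pow, hone]
    · simp [m, orderedCount_mk, hab, heven.two_dvd, pairSign, mul_pow]
  · have hm (a b : α) : m s(a, b) = if a = b then 1 else 0 := by
      rcases eq_or_ne a b with rfl | hab
      · simp [m, orderedCount_mk, pairSign]
      · simp [m, orderedCount_mk, hab, ← even_iff_two_dvd, heven]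
    simp [hm]

theorem X_mul_derivative_prod_signedGeomSeries :
    X * d⁄dX ℚ (∏ z, signedGeomSeries (pairSign ε z) (orderedCount z)) =
      mk (pairWeight ε) * ∏ z, signedGeomSeries (pairSign ε z) (orderedCount z) := by
  rw [X_mul_derivative_prod fun z _ =>
    X_mul_derivative_signedGeomSeries (pairSign ε z) (orderedCount_pos z)]
  congr 1
  ext k
  simp [← sum_powerSumWeight]

end PairSeries

section ExponentialFormula

open Finset hiding mk
open PowerSeries

/-- The order `z_λ = ∏ i, i ^ mᵢ * mᵢ!` of the centralizer of a permutation whose cycle lengths,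
fixed points included, form the multiset `s`. -/
def centralizerOrder (s : Multiset ℕ) : ℕ :=
  s.prod * ∏ i ∈ s.toFinset, (s.count i).factorial

theorem centralizerOrder_cons (a : ℕ) (s : Multiset ℕ) :
    centralizerOrder (a ::ₘ s) = a * (s.count a + 1) * centralizerOrder s := by
  have hs : ∏ i ∈ s.toFinset, (s.count i).factorial
      = ∏ i ∈ insert a s.toFinset, (s.count i).factorial :=
    prod_subset (subset_insert _ _) fun i _ hi => by
      rw [Multiset.count_eq_zero_of_notMem (by simpa using hi), Nat.factorial_zero]
  have herase : ∏ i ∈ (insert a s.toFinset).erase a, ((a ::ₘ s).count i).factorial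
      = ∏ i ∈ (insert a s.toFinset).erase a, (s.count i).factorial :=
    prod_congr rfl fun i hi => by rw [Multiset.count_cons_of_ne (ne_of_mem_erase hi)]
  have ha : a ∈ insert a s.toFinset := mem_insert_self _ _
  rw [centralizerOrder, centralizerOrder, hs, Multiset.toFinset_cons, Multiset.prod_cons,
    ← mul_prod_erase _ _ ha, ← mul_prod_erase _ _ ha, herase, Multiset.count_cons_self,
    Nat.factorial_succ]
  ring

theorem centralizerOrder_add_replicate_one {s : Multiset ℕ} (hs : 1 ∉ s) (k : ℕ) :
    centralizerOrder (s + Multiset.replicate k 1) = k.factorial * centralizerOrder s := by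
  induction k with
  | zero => simp
  | succ k ih =>
    rw [Multiset.replicate_succ, Multiset.add_cons, centralizerOrder_cons, ih, Multiset.count_add,
      Multiset.count_eq_zero_of_notMem hs, Multiset.count_replicate_self, Nat.factorial_succ]
    ring

theorem centralizerOrder_ne_zero {s : Multiset ℕ} (hs : 0 ∉ s) : centralizerOrder s ≠ 0 :=
  mul_ne_zero (by simpa [Multiset.prod_eq_zero_iff] using hs)
    (prod_ne_zero_iff.2 fun _ _ => Nat.factorial_ne_zero _)

theorem sum_fullCycleType {n : ℕ} (σ : Equiv.Perm (Fin n)) : (fullCycleType n σ).sum = n := by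
  have hle : #σ.support ≤ n := by simpa using σ.support.card_le_univ
  simp [fullCycleType, Equiv.Perm.sum_cycleType, hle]

theorem pos_of_mem_fullCycleType {n p : ℕ} {σ : Equiv.Perm (Fin n)} (hp : p ∈ fullCycleType n σ) :
    0 < p := by
  rcases Multiset.mem_add.1 hp with hp | hp
  · exact two_pos.trans_le (Equiv.Perm.two_le_of_mem_cycleType hp)
  · rw [Multiset.eq_of_mem_replicate hp]
    exact one_pos

theorem filter_two_le_add_replicate_one {s : Multiset ℕ} (hs : 0 ∉ s) :
    s.filter (2 ≤ ·) + Multiset.replicate (s.sum - (s.filter (2 ≤ ·)).sum) 1 = s := by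
  have hones : s.filter (¬ 2 ≤ ·) = Multiset.replicate (s.filter (¬ 2 ≤ ·)).card 1 :=
    Multiset.eq_replicate_card.2 fun p hp => by
      obtain ⟨hps, hp2⟩ := Multiset.mem_filter.1 hp
      have hp0 : p ≠ 0 := ne_of_mem_of_not_mem hps hs
      omega
  have hsplit := Multiset.filter_add_not (2 ≤ ·) s
  have hsum := congrArg Multiset.sum hsplit
  rw [Multiset.sum_add, hones, Multiset.sum_replicate, smul_eq_mul, mul_one] at hsum
  rw [← hsum, Nat.add_sub_cancel_left, ← hones, hsplit]

theorem fullCycleType_eq_parts_iff {n : ℕ} (σ : Equiv.Perm (Fin n)) (l : n.Partition) :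
    fullCycleType n σ = l.parts ↔ σ.cycleType = l.parts.filter (2 ≤ ·) := by
  constructor <;> intro h
  · rw [← h, fullCycleType, Multiset.filter_add,
      Multiset.filter_eq_self.2 fun _ => Equiv.Perm.two_le_of_mem_cycleType,
      Multiset.filter_eq_nil.2, add_zero]
    intro p hp
    rw [Multiset.eq_of_mem_replicate hp]
    decide
  · rw [← filter_two_le_add_replicate_one fun h0 => (l.parts_pos h0).false, ← h, l.parts_sum,
      Equiv.Perm.sum_cycleType, fullCycleType]

theorem card_fullCycleType_eq_mul_centralizerOrder {n : ℕ} (l : n.Partition) :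
    #{σ : Equiv.Perm (Fin n) | fullCycleType n σ = l.parts} * centralizerOrder l.parts
      = n.factorial := by
  set m := l.parts.filter (2 ≤ ·) with hm
  have hparts : m + Multiset.replicate (n - m.sum) 1 = l.parts := by
    simpa [l.parts_sum] using
      filter_two_le_add_replicate_one fun h0 => (l.parts_pos h0).false
  have hone : 1 ∉ m := by simp [hm]
  have hle : m.sum ≤ n := by
    rw [← l.parts_sum, ← hparts, Multiset.sum_add]
    exact Nat.le_add_right _ _
  have hcard := Equiv.Perm.card_of_cycleType_mul_eq (Fin n) m
  rw [if_pos (by simpa [hm] using hle), Fintype.card_fin] at hcard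
  simp only [fullCycleType_eq_parts_iff, ← hm]
  rw [← hparts, centralizerOrder_add_replicate_one hone, ← hcard, centralizerOrder, mul_assoc]

variable {K : Type*} [Field K]

/-- The weight `w_λ / z_λ` of a cycle type, where a cycle of length `i` has weight `w i`. -/
def cycleTypeWeight (w : ℕ → K) (s : Multiset ℕ) : K :=
  (s.map w).prod / centralizerOrder s

theorem sum_prod_fullCycleType [CharZero K] (w : ℕ → K) (n : ℕ) :
    ∑ σ : Equiv.Perm (Fin n), ((fullCycleType n σ).map w).prod
      = n.factorial * ∑ l : n.Partition, cycleTypeWeight w l.parts := by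
  let part (σ : Equiv.Perm (Fin n)) : n.Partition :=
    ⟨fullCycleType n σ, pos_of_mem_fullCycleType, sum_fullCycleType σ⟩
  have hpart (σ : Equiv.Perm (Fin n)) (l : n.Partition) :
      part σ = l ↔ fullCycleType n σ = l.parts := Nat.Partition.ext_iff
  rw [← sum_fiberwise (g := part), mul_sum]
  refine sum_congr rfl fun l _ => ?_
  have hz : (centralizerOrder l.parts : K) ≠ 0 :=
    Nat.cast_ne_zero.2 (centralizerOrder_ne_zero fun h => (l.parts_pos h).false)
  simp only [hpart]
  rw [sum_congr rfl fun σ hσ => by rw [(mem_filter.1 hσ).2], sum_const, nsmul_eq_mul,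
    ← card_fullCycleType_eq_mul_centralizerOrder l, cycleTypeWeight, Nat.cast_mul]
  field_simp

theorem natCast_mul_cycleTypeWeight_cons [CharZero K] (w : ℕ → K) {i : ℕ} (hi : i ≠ 0)
    (s : Multiset ℕ) :
    (i * (i ::ₘ s).count i : K) * cycleTypeWeight w (i ::ₘ s) = w i * cycleTypeWeight w s := by
  have hi' : (i : K) ≠ 0 := Nat.cast_ne_zero.2 hi
  have hcount : (s.count i + 1 : K) ≠ 0 := Nat.cast_add_one_ne_zero _
  rw [cycleTypeWeight, cycleTypeWeight, centralizerOrder_cons, Multiset.count_cons_self,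
    Multiset.map_cons, Multiset.prod_cons]
  push_cast
  field_simp

theorem sum_Icc_mul_count_parts {n : ℕ} (l : n.Partition) :
    ∑ i ∈ Icc 1 n, i * l.parts.count i = n := by
  conv_rhs => rw [← l.parts_sum, sum_multiset_count]
  simp only [smul_eq_mul, mul_comm]
  refine (sum_subset (fun i hi => ?_) fun i _ hi => ?_).symm
  · rw [Multiset.mem_toFinset] at hi
    exact mem_Icc.2 ⟨l.parts_pos hi, Nat.Partition.le_of_mem_parts hi⟩
  · rw [Multiset.count_eq_zero_of_notMem (by simpa using hi), mul_zero]

-- The bijection deletes one part of size `i`.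
theorem sum_mul_count_mul_cycleTypeWeight [CharZero K] (w : ℕ → K) {i n : ℕ} (hi : 0 < i)
    (hin : i ≤ n) :
    ∑ l : n.Partition, (i * l.parts.count i : K) * cycleTypeWeight w l.parts
      = w i * ∑ l : (n - i).Partition, cycleTypeWeight w l.parts := by
  have hzero (l : n.Partition) (hl : l ∉ univ.filter fun l : n.Partition => i ∈ l.parts) :
      (i * l.parts.count i : K) * cycleTypeWeight w l.parts = 0 := by
    rw [Multiset.count_eq_zero_of_notMem (by simpa using hl)]
    simp
  rw [← sum_subset (subset_univ _) fun l _ => hzero l,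
    sum_subtype _ (p := fun l : n.Partition => i ∈ l.parts) (by simp),
    ← (Nat.Partition.partitionWithPartEquiv hi hin).symm.sum_comp, mul_sum]
  refine sum_congr rfl fun l _ => ?_
  rw [Nat.Partition.partitionWithPartEquiv_symm_apply_parts,
    natCast_mul_cycleTypeWeight_cons w hi.ne']

theorem natCast_mul_sum_cycleTypeWeight [CharZero K] (w : ℕ → K) (n : ℕ) :
    n * ∑ l : n.Partition, cycleTypeWeight w l.parts
      = ∑ i ∈ Icc 1 n, w i * ∑ l : (n - i).Partition, cycleTypeWeight w l.parts := by
  calc n * ∑ l : n.Partition, cycleTypeWeight w l.parts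
      = ∑ l : n.Partition, ∑ i ∈ Icc 1 n,
          (i * l.parts.count i : K) * cycleTypeWeight w l.parts := by
        rw [mul_sum]
        refine sum_congr rfl fun l _ => ?_
        rw [← sum_mul]
        exact_mod_cast congrArg (fun k : ℕ => (k : K) * cycleTypeWeight w l.parts)
          (sum_Icc_mul_count_parts l).symm
    _ = ∑ i ∈ Icc 1 n, w i * ∑ l : (n - i).Partition, cycleTypeWeight w l.parts := by
        rw [sum_comm]
        refine sum_congr rfl fun i hi => ?_
        obtain ⟨hpos, hle⟩ := mem_Icc.1 hi
        exact sum_mul_count_mul_cycleTypeWeight w hpos hle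

theorem X_mul_derivative_mk_sum_cycleTypeWeight [CharZero K] {w : ℕ → K} (hw : w 0 = 0) :
    X * d⁄dX K (mk fun n => ∑ l : n.Partition, cycleTypeWeight w l.parts)
      = mk w * mk fun n => ∑ l : n.Partition, cycleTypeWeight w l.parts := by
  set b : ℕ → K := fun n => ∑ l : n.Partition, cycleTypeWeight w l.parts
  ext n
  calc coeff n (X * d⁄dX K (mk b)) = n * b n := by
        cases n <;> simp [coeff_succ_X_mul, coeff_derivative, mul_comm]
    _ = ∑ i ∈ Icc 1 n, w i * b (n - i) := natCast_mul_sum_cycleTypeWeight w n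
    _ = ∑ i ∈ range (n + 1), w i * b (n - i) := by
        rw [sum_range_eq_add_Ico _ n.succ_pos, hw, zero_mul, zero_add]
        rfl
    _ = coeff n (mk w * mk b) := by
        simp only [coeff_mul, coeff_mk]
        exact (Nat.sum_antidiagonal_eq_sum_range_succ (fun i j => w i * b j) n).symm

theorem eq_of_X_mul_derivative_eq [CharZero K] {F G W : K⟦X⟧} (hF : X * d⁄dX K F = W * F)
    (hG : X * d⁄dX K G = W * G) (hF0 : constantCoeff F = 1) (hG0 : constantCoeff G = 1) :
    F = G := by
  have hGinv : G * G⁻¹ = 1 := PowerSeries.mul_inv_cancel _ (by simp [hG0])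
  have hderiv : d⁄dX K (F * G⁻¹) = 0 := by
    refine mul_left_cancel₀ (X_ne_zero (R := K)) ?_
    rw [Derivation.leibniz, derivative_inv', smul_eq_mul, smul_eq_mul]
    linear_combination G⁻¹ * hF - F * G⁻¹ ^ 2 * hG - W * F * G⁻¹ * hGinv
  have hone : F * G⁻¹ = 1 := derivative.ext (by simpa using hderiv) (by simp [hF0, hG0])
  linear_combination G * hone - F * hGinv

theorem sum_prod_fullCycleType_eq_factorial_mul_coeff [CharZero K] {w : ℕ → K} {F : K⟦X⟧}
    (hF : X * d⁄dX K F = mk w * F) (hF0 : constantCoeff F = 1) (n : ℕ) :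
    ∑ σ : Equiv.Perm (Fin n), ((fullCycleType n σ).map w).prod = n.factorial * coeff n F := by
  have hw : w 0 = 0 := by simpa [hF0] using (congrArg constantCoeff hF).symm
  have hparts : F = mk fun n => ∑ l : n.Partition, cycleTypeWeight w l.parts :=
    eq_of_X_mul_derivative_eq hF (X_mul_derivative_mk_sum_cycleTypeWeight hw) hF0
      (by simp [cycleTypeWeight, centralizerOrder])
  rw [sum_prod_fullCycleType, hparts, coeff_mk]

end ExponentialFormula

section CyclesOfPowers

open Finset

theorem eq_orderOf_of_mem_cycleType_pow {α : Type*} [Fintype α] [DecidableEq α]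
    {σ : Equiv.Perm α} (hσ : σ.IsCycle) {k p : ℕ} (hp : p ∈ (σ ^ k).cycleType) :
    p = orderOf (σ ^ k) := by
  refine Nat.dvd_antisymm (Equiv.Perm.dvd_of_mem_cycleType hp) ?_
  rw [Equiv.Perm.cycleType_def, Multiset.mem_map] at hp
  obtain ⟨c, hc, rfl⟩ := hp
  obtain ⟨hcycle, -⟩ := Equiv.Perm.mem_cycleFactorsFinset_iff.1 hc
  obtain ⟨x, hx⟩ := hcycle.nonempty_support
  have hxσ : σ x ≠ x := Equiv.Perm.mem_support.1 <| Equiv.Perm.support_pow_le σ k <|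
    Equiv.Perm.mem_cycleFactorsFinset_support_le hc hx
  have hfix : ((σ ^ k) ^ orderOf c) x = x := by
    rw [← Equiv.Perm.cycleOf_pow_apply_self, ← Equiv.Perm.cycle_is_cycleOf hx hc,
      pow_orderOf_eq_one, Equiv.Perm.one_apply]
  rw [Function.comp_apply, ← hcycle.orderOf]
  refine orderOf_dvd_of_pow_eq_one ?_
  rw [← pow_mul] at hfix ⊢
  exact (hσ.pow_eq_one_iff' hxσ).2 hfix

theorem card_cycleType_pow_add_card_support_of_isCycle {α : Type*} [Fintype α] [DecidableEq α]
    {σ : Equiv.Perm α} (hσ : σ.IsCycle) (k : ℕ) :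
    (σ ^ k).cycleType.card + #σ.support = (#σ.support).gcd k + #(σ ^ k).support := by
  rw [← hσ.orderOf]
  by_cases hk : orderOf σ ∣ k
  · simp [orderOf_dvd_iff_pow_eq_one.1 hk, Nat.gcd_eq_left hk]
  have hsupp : #(σ ^ k).support = orderOf σ := by
    rw [hσ.support_pow_eq_iff.2 hk, hσ.orderOf]
  have hsum := (σ ^ k).sum_cycleType
  rw [Multiset.eq_replicate_card.2 fun p hp => eq_orderOf_of_mem_cycleType_pow hσ hp,
    Multiset.sum_replicate, hsupp, orderOf_pow, smul_eq_mul] at hsum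
  have hgcd : (orderOf σ).gcd k * (orderOf σ / (orderOf σ).gcd k) = orderOf σ :=
    Nat.mul_div_cancel' (Nat.gcd_dvd_left _ _)
  have hne : orderOf σ / (orderOf σ).gcd k ≠ 0 := fun h =>
    (orderOf_pos σ).ne (by simpa [h] using hgcd)
  rw [hsupp, mul_right_cancel₀ hne (hsum.trans hgcd.symm)]

theorem card_cycleType_pow_add_card_support {α : Type*} [Fintype α] [DecidableEq α]
    (σ : Equiv.Perm α) (k : ℕ) :
    (σ ^ k).cycleType.card + #σ.support
      = (σ.cycleType.map (Nat.gcd · k)).sum + #(σ ^ k).support := by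
  induction σ using Equiv.Perm.cycle_induction_on with
  | base_one => simp
  | base_cycles σ hσ =>
    simpa [hσ.cycleType] using card_cycleType_pow_add_card_support_of_isCycle hσ k
  | induction_disjoint σ τ hd _ hσ hτ =>
    have hdpow := hd.pow_disjoint_pow k k
    rw [hd.commute.mul_pow, hdpow.cycleType_mul, hd.cycleType_mul, hdpow.card_support_mul,
      hd.card_support_mul, Multiset.card_add, Multiset.map_add, Multiset.sum_add]
    omega

theorem numCycles_pow {n : ℕ} (σ : Equiv.Perm (Fin n)) (k : ℕ) :
    numCycles n (σ ^ k) = ((fullCycleType n σ).map (Nat.gcd · k)).sum := by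
  have h := card_cycleType_pow_add_card_support σ k
  have hσ : #σ.support ≤ n := by simpa using σ.support.card_le_univ
  have hpow : #(σ ^ k).support ≤ n := by simpa using (σ ^ k).support.card_le_univ
  simp only [numCycles, fullCycleType, Multiset.card_add, Multiset.card_replicate, Multiset.map_add,
    Multiset.map_replicate, Multiset.sum_add, Multiset.sum_replicate, Nat.gcd_one_left, smul_eq_mul,
    mul_one]
  omega

theorem numCycles_mem_Icc {n : ℕ} (hn : 1 ≤ n) (σ : Equiv.Perm (Fin n)) :
    numCycles n σ ∈ Icc 1 n := by
  have hsum := sum_fullCycleType σ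
  refine mem_Icc.2 ⟨Multiset.card_pos.2 fun h => ?_, ?_⟩
  · simp only [h, Multiset.sum_zero] at hsum
    omega
  · simpa [hsum, numCycles] using
      Multiset.card_nsmul_le_sum (a := 1) fun _ => pos_of_mem_fullCycleType (σ := σ)

theorem numCycles_sq_mod_two {n : ℕ} (σ : Equiv.Perm (Fin n)) :
    numCycles n (σ ^ 2) % 2 = n % 2 := by
  have hgcd (p : ℕ) : p.gcd 2 % 2 = p % 2 := by
    rcases Nat.mod_two_eq_zero_or_one p with hp | hp <;> rw [Nat.gcd_comm, Nat.gcd_rec, hp] <;>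
      rfl
  conv_rhs => rw [← sum_fullCycleType σ]
  rw [numCycles_pow, Multiset.sum_nat_mod, Multiset.map_map,
    Multiset.sum_nat_mod (fullCycleType n σ)]
  simp only [Function.comp_apply, hgcd]

theorem prod_fullCycleType_ite_pow_gcd {R : Type*} [CommSemiring R] {n : ℕ} (x : R)
    (σ : Equiv.Perm (Fin n)) (d k : ℕ) :
    ((fullCycleType n σ).map fun p => if d ∣ p then 0 else x ^ p.gcd k).prod
      = if ∀ p ∈ fullCycleType n σ, ¬ d ∣ p then x ^ numCycles n (σ ^ k) else 0 := by
  rw [numCycles_pow]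
  induction fullCycleType n σ using Multiset.induction_on with
  | empty => simp
  | cons p s ih =>
    by_cases hp : d ∣ p
    · simp [hp]
    · simp [hp, ih, pow_add]

theorem sum_prod_fullCycleType_ite_pow_gcd {R : Type*} [CommSemiring R] {n : ℕ} (hn : 1 ≤ n)
    (x : R) :
    ∑ σ : Equiv.Perm (Fin n),
        ((fullCycleType n σ).map fun p => if 4 ∣ p then 0 else x ^ p.gcd 2).prod
      = ∑ k ∈ Icc 1 n with k % 2 = n % 2, (cnk n k : R) * x ^ k := by
  simp only [prod_fullCycleType_ite_pow_gcd]
  have hmem (σ : Equiv.Perm (Fin n)) :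
      numCycles n (σ ^ 2) ∈ (Icc 1 n).filter fun k => k % 2 = n % 2 :=
    mem_filter.2 ⟨numCycles_mem_Icc hn (σ ^ 2), numCycles_sq_mod_two σ⟩
  rw [← sum_filter, ← sum_fiberwise_of_maps_to fun σ _ => hmem σ]
  refine sum_congr rfl fun k _ => ?_
  rw [sum_congr rfl fun σ hσ => by rw [(mem_filter.1 hσ).2], sum_const, nsmul_eq_mul, filter_filter,
    cnk]

theorem factorial_mul_sum_invSet_compatibleCount {α : Type*} [Fintype α] [LinearOrder α]
    {ε : α → ℤˣ} (hε : ∑ a, (ε a : ℤ) = 0) {n : ℕ} (hn : 1 ≤ n) :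
    (n.factorial : ℚ) * ∑ π ∈ invSet n, (compatibleCount ε π : ℚ)
      = ∑ k ∈ Icc 1 n with k % 2 = n % 2,
          (cnk n k : ℚ) * ∑ π : Equiv.Perm (Fin k), (compatibleCount ε π : ℚ) := by
  have hconst : PowerSeries.constantCoeff
      (∏ z : Sym2 α, signedGeomSeries (pairSign ε z) (orderedCount z)) = 1 := by
    simp [map_prod, signedGeomSeries]
  have hexp := sum_prod_fullCycleType_eq_factorial_mul_coeff
    (X_mul_derivative_prod_signedGeomSeries ε) hconst n
  rw [funext (pairWeight_of_sum_eq_zero hε), sum_prod_fullCycleType_ite_pow_gcd hn,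
    coeff_prod_signedGeomSeries, ← sum_invSet_compatibleCount] at hexp
  push_cast at hexp
  rw [← hexp]
  refine sum_congr rfl fun k _ => ?_
  rw [← Nat.cast_pow, ← sum_compatibleCount, Nat.cast_sum]

end CyclesOfPowers

section EnrichedPartitions

open Finset hiding mk
open PowerSeries

theorem card_chain_snoc {α : Type*} [Fintype α] (r : ℕ → α → α → Prop) (k : ℕ) (c : α) :
    #{f : Fin (k + 2) → α |
        f (Fin.last _) = c ∧ ∀ i : Fin (k + 1), r i (f i.castSucc) (f i.succ)}
      = ∑ b with r k b c, #{f : Fin (k + 1) → α |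
          f (Fin.last _) = b ∧ ∀ i : Fin k, r i (f i.castSucc) (f i.succ)} := by
  rw [card_eq_sum_card_fiberwise (f := fun f => f (Fin.last k).castSucc)
    (t := univ.filter fun b => r k b c)]
  · refine sum_congr rfl fun b hb => card_nbij' Fin.init (fun g => Fin.snoc g c) ?_ ?_ ?_ ?_
    · intro f hf
      simp only [coe_filter, Fin.forall_fin_succ', mem_filter, mem_univ, true_and,
        Set.mem_ofPred_eq] at hf ⊢
      exact ⟨hf.2, fun i => hf.1.2.1 i⟩
    · intro g hg
      simp only [coe_filter, Fin.forall_fin_succ', mem_filter, mem_univ, true_and,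
        Set.mem_ofPred_eq, Fin.snoc_last, Fin.snoc_castSucc, Fin.succ_last] at hb hg ⊢
      refine ⟨⟨fun i => ?_, ?_⟩, hg.1⟩
      · rw [← Fin.castSucc_succ, Fin.snoc_castSucc]
        exact hg.2 i
      · rw [hg.1]
        exact hb
    · intro f hf
      simp only [coe_filter, mem_filter, mem_univ, true_and, Set.mem_ofPred_eq] at hf
      rw [← hf.1.1]
      exact Fin.snoc_init_self f
    · intro g _
      exact Fin.init_snoc _ _
  · intro f hf
    simp only [coe_filter, mem_univ, true_and, Set.mem_ofPred_eq] at hf ⊢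
    rw [← hf.1]
    exact hf.2 (Fin.last k)

/-- The number of words `f₀ ≤ ⋯ ≤ fₖ = c` of natural numbers in which `fᵢ = fᵢ₊₁` is allowed only
when `fᵢ` is odd and `a (i + 1)` holds, or `fᵢ` is even and `a (i + 1)` fails. -/
def chainCount (a : ℕ → Prop) : ℕ → ℕ → ℕ
  | 0, _ => 1
  | k + 1, c =>
    ∑ b ∈ range c, chainCount a k b + if Odd c ↔ a (k + 1) then chainCount a k c else 0

theorem card_chain_eq_chainCount {L : ℕ} (a : ℕ → Prop) (k : ℕ) (c : Fin L) :
    #{f : Fin (k + 1) → Fin L | f (Fin.last _) = c ∧ ∀ i : Fin k, f i.castSucc < f i.succ ∨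
        f i.castSucc = f i.succ ∧ (Odd (f i.castSucc : ℕ) ↔ a (i + 1))}
      = chainCount a k c := by
  induction k generalizing c with
  | zero =>
    have huniq : univ.filter (fun f : Fin 1 → Fin L => f (Fin.last 0) = c ∧ ∀ i : Fin 0,
        f i.castSucc < f i.succ ∨ f i.castSucc = f i.succ ∧ (Odd (f i.castSucc : ℕ) ↔ a (i + 1)))
        = {fun _ => c} := by
      ext f
      simp [funext_iff, Fin.forall_fin_one]
    rw [huniq, card_singleton, chainCount]
  | succ k ih =>
    have hsplit : univ.filter (fun b : Fin L => b < c ∨ b = c ∧ (Odd (b : ℕ) ↔ a (k + 1)))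
        = Iio c ∪ if Odd (c : ℕ) ↔ a (k + 1) then {c} else ∅ := by
      ext b
      split_ifs with hc <;> simp <;> grind
    have hdisj : Disjoint (Iio c) (if Odd (c : ℕ) ↔ a (k + 1) then {c} else ∅) := by
      split_ifs <;> simp
    trans ∑ b : Fin L with b < c ∨ b = c ∧ (Odd (b : ℕ) ↔ a (k + 1)), chainCount a k b
    · simp only [← ih]
      convert card_chain_snoc (fun i (b c : Fin L) => b < c ∨ b = c ∧ (Odd (b : ℕ) ↔ a (i + 1))) k c
    rw [hsplit, sum_union hdisj]
    rw [chainCount, ← Nat.Iio_eq_range, ← Fin.map_valEmbedding_Iio, sum_map]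
    split_ifs <;> simp

/-- Position `i` (counted from `1`) is an ascent of `π`. -/
def IsAscent {n : ℕ} (π : Equiv.Perm (Fin n)) (i : ℕ) : Prop :=
  1 ≤ i ∧ oneLine n π i < oneLine n π (i + 1)

lemma oneLine_succ {n : ℕ} (π : Equiv.Perm (Fin n)) (i : Fin n) :
    oneLine n π (i + 1) = π i + 1 := by
  simp [oneLine]

lemma isAscent_succ_iff {k : ℕ} (π : Equiv.Perm (Fin (k + 1))) (i : Fin k) :
    IsAscent π (i + 1) ↔ π i.castSucc < π i.succ := by
  have hcast := oneLine_succ π i.castSucc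
  have hsucc := oneLine_succ π i.succ
  rw [Fin.val_castSucc] at hcast
  rw [Fin.val_succ] at hsucc
  rw [IsAscent, hcast, hsucc]
  simp

/-- The number of places where `a` changes from true to false, up to index `k`. -/
def fallCount (a : ℕ → Prop) (k : ℕ) : ℕ :=
  #{i ∈ range k | a i ∧ ¬ a (i + 1)}

lemma pk_eq_fallCount {k : ℕ} (π : Equiv.Perm (Fin (k + 1))) :
    pk (k + 1) π = fallCount (IsAscent π) k := by
  have hdesc {i : ℕ} (hi : i + 1 < k + 1) :
      oneLine (k + 1) π (i + 2) < oneLine (k + 1) π (i + 1) ↔ ¬ IsAscent π (i + 1) := by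
    have hne : oneLine (k + 1) π (i + 1) ≠ oneLine (k + 1) π (i + 2) := by
      have hi' := oneLine_succ π ⟨i, by omega⟩
      have hsucc := oneLine_succ π ⟨i + 1, hi⟩
      dsimp only at hi' hsucc
      rw [hi', hsucc, Ne, Nat.add_right_cancel_iff, Fin.val_inj, π.apply_eq_iff_eq, Fin.mk.injEq]
      exact (Nat.succ_ne_self i).symm
    rw [IsAscent, show i + 1 + 1 = i + 2 from rfl]
    omega
  refine card_nbij' (· - 1) (· + 1) ?_ ?_ ?_ ?_
  · intro i hi
    simp only [coe_filter, mem_Icc, mem_range, Set.mem_ofPred_eq] at hi ⊢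
    obtain ⟨j, rfl⟩ : ∃ j, i = j + 2 := ⟨i - 2, by omega⟩
    exact ⟨by omega, ⟨by omega, hi.2.1⟩, (hdesc (by omega)).1 hi.2.2⟩
  · intro i hi
    simp only [coe_filter, mem_Icc, mem_range, Set.mem_ofPred_eq, add_tsub_cancel_right] at hi ⊢
    exact ⟨⟨Nat.succ_le_succ hi.2.1.1, by omega⟩, hi.2.1.2, (hdesc (by omega)).2 hi.2.2⟩
  · intro i hi
    exact Nat.sub_add_cancel (one_le_two.trans (mem_Icc.1 (mem_filter.1 hi).1).1)
  · intro i _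
    exact Nat.add_sub_cancel i 1

/-- The signs of the letters `0, …, 2 * m - 1`, alternating and starting with `-1`. -/
def alternatingSign (m : ℕ) (a : Fin (2 * m)) : ℤˣ := (-1) ^ ((a : ℕ) + 1)

lemma sum_alternatingSign (m : ℕ) : ∑ a, (alternatingSign m a : ℤ) = 0 := by
  simp only [alternatingSign, Units.val_pow_eq_pow_val, Units.val_neg, Units.val_one]
  rw [Fin.sum_univ_eq_sum_range fun a => (-1 : ℤ) ^ (a + 1)]
  induction m with
  | zero => simp
  | succ m ih =>
    rw [mul_add_one, sum_range_succ, sum_range_succ, ih, pow_succ _ (2 * m + 1)]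
    ring

lemma alternatingSign_eq_one_iff {m : ℕ} {a : Fin (2 * m)} :
    alternatingSign m a = 1 ↔ Odd (a : ℕ) := by
  rw [alternatingSign, neg_one_pow_eq_one_iff_even (by decide), Nat.even_add_one,
    Nat.not_even_iff_odd]

theorem compatibleCount_alternatingSign {k m : ℕ} (π : Equiv.Perm (Fin (k + 1))) :
    compatibleCount (alternatingSign m) π
      = ∑ c ∈ range (2 * m), chainCount (IsAscent π) k c := by
  have hstep (f : Fin (k + 1) → Fin (2 * m)) : IsCompatible (alternatingSign m) π f ↔
      ∀ i : Fin k, f i.castSucc < f i.succ ∨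
        f i.castSucc = f i.succ ∧ (Odd (f i.castSucc : ℕ) ↔ IsAscent π (i + 1)) := by
    simp only [IsCompatible, Fin.strictMono_iff_lt_succ, signedKey_lt_signedKey,
      alternatingSign_eq_one_iff, isAscent_succ_iff]
    refine forall_congr' fun i => or_congr_right (and_congr_right fun _ => ?_)
    have hne : π i.castSucc ≠ π i.succ := π.injective.ne i.castSucc_lt_succ.ne
    split_ifs with hodd
    · simp [hodd]
    · simp [hodd, hne.symm.le_iff_lt]
  rw [← Fin.sum_univ_eq_sum_range]
  simp only [← card_chain_eq_chainCount, compatibleCount, hstep]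
  rw [card_eq_sum_card_fiberwise (f := fun f => f (Fin.last k)) (t := univ) (by simp)]
  simp only [filter_filter, and_comm]

/-- `(1 + X) / (1 - X)`, the factor contributed by each letter to the series counting chains. -/
def letterFactor : ℚ⟦X⟧ := (1 + X) * (1 - X)⁻¹

/-- `4 X / (1 + X) ^ 2`, the factor contributed by each peak to the series counting chains. -/
def peakFactor : ℚ⟦X⟧ := 4 * X * (1 + X)⁻¹ ^ 2

lemma one_sub_X_mul_letterFactor : (1 - X) * letterFactor = 1 + X := by
  have h : (1 - X : ℚ⟦X⟧) * (1 - X)⁻¹ = 1 := PowerSeries.mul_inv_cancel _ (by simp)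
  rw [letterFactor]
  linear_combination (1 + X) * h

lemma one_add_X_sq_mul_peakFactor : (1 + X) ^ 2 * peakFactor = 4 * X := by
  have h : (1 + X : ℚ⟦X⟧) * (1 + X)⁻¹ = 1 := PowerSeries.mul_inv_cancel _ (by simp)
  rw [peakFactor]
  linear_combination 4 * X * ((1 + X) * (1 + X)⁻¹ + 1) * h

lemma one_sub_X_ne_zero : (1 - X : ℚ⟦X⟧) ≠ 0 := fun h => by
  simpa using congrArg constantCoeff h

lemma one_add_X_ne_zero : (1 + X : ℚ⟦X⟧) ≠ 0 := fun h => by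
  simpa using congrArg constantCoeff h

lemma letterFactor_sq_mul_one_sub_peakFactor : letterFactor ^ 2 * (1 - peakFactor) = 1 := by
  refine mul_left_cancel₀ (pow_ne_zero 2 one_sub_X_ne_zero) ?_
  rw [← mul_assoc, ← mul_pow, one_sub_X_mul_letterFactor]
  linear_combination -one_add_X_sq_mul_peakFactor

variable (a : ℕ → Prop) (k : ℕ)

/-- Generating function of the chains whose last letter is the even letter `2 l`. -/
def evenSeries : ℚ⟦X⟧ := mk fun l => (chainCount a k (2 * l) : ℚ)

/-- Generating function of the chains whose last letter is `2 l` or `2 l + 1`. -/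
def blockSeries : ℚ⟦X⟧ := mk fun l => (chainCount a k (2 * l) + chainCount a k (2 * l + 1) : ℚ)

/-- Generating function of the chains with letters smaller than `2 l`. -/
def chainSeries : ℚ⟦X⟧ := mk fun l => ∑ c ∈ range (2 * l), (chainCount a k c : ℚ)

lemma one_sub_X_mul_chainSeries : (1 - X) * chainSeries a k = X * blockSeries a k := by
  ext l
  rw [sub_mul, one_mul, map_sub]
  cases l with
  | zero => simp [chainSeries]
  | succ l =>
    simp only [coeff_succ_X_mul, chainSeries, blockSeries, coeff_mk, mul_add_one, sum_range_succ]
    ring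

variable {a k}

lemma evenSeries_succ_of_ascent (h : a (k + 1)) : evenSeries a (k + 1) = chainSeries a k := by
  ext l
  simp [evenSeries, chainSeries, chainCount, h]

lemma evenSeries_succ_of_not_ascent (h : ¬ a (k + 1)) :
    evenSeries a (k + 1) = chainSeries a k + evenSeries a k := by
  ext l
  simp [evenSeries, chainSeries, chainCount, h]

lemma blockSeries_succ_of_ascent (h : a (k + 1)) :
    blockSeries a (k + 1) = 2 * chainSeries a k + blockSeries a k := by
  ext l
  have heven : ¬ Odd (2 * l) := by simp
  have hodd : Odd (2 * l + 1) := odd_two_mul_add_one l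
  rw [two_mul]
  simp only [blockSeries, chainSeries, map_add, coeff_mk, chainCount, h, iff_true, sum_range_succ,
    if_neg heven, if_pos hodd]
  push_cast
  ring

lemma blockSeries_succ_of_not_ascent (h : ¬ a (k + 1)) :
    blockSeries a (k + 1) = 2 * evenSeries a (k + 1) := by
  ext l
  rw [two_mul]
  simp [blockSeries, evenSeries, chainCount, h, sum_range_succ]

lemma one_add_X_mul_evenSeries (h : a (k + 1)) :
    (1 + X) * evenSeries a (k + 1) = X * blockSeries a (k + 1) := by
  rw [evenSeries_succ_of_ascent h, blockSeries_succ_of_ascent h]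
  linear_combination one_sub_X_mul_chainSeries a k

lemma two_mul_evenSeries (h : ¬ a k) : 2 * evenSeries a k = blockSeries a k := by
  cases k with
  | zero =>
    ext l
    rw [two_mul]
    simp [evenSeries, blockSeries, chainCount]
  | succ k => exact (blockSeries_succ_of_not_ascent h).symm

lemma blockSeries_succ (h0 : ¬ a 0) :
    blockSeries a (k + 1)
      = letterFactor * (if a k ∧ ¬ a (k + 1) then peakFactor else 1) * blockSeries a k := by
  have hchain := one_sub_X_mul_chainSeries a k
  have hletter := one_sub_X_mul_letterFactor
  refine mul_left_cancel₀ one_sub_X_ne_zero ?_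
  by_cases h : a (k + 1)
  · rw [if_neg fun hk => hk.2 h, blockSeries_succ_of_ascent h]
    linear_combination 2 * hchain - blockSeries a k * hletter
  rw [blockSeries_succ_of_not_ascent h, evenSeries_succ_of_not_ascent h]
  by_cases hk : a k
  · obtain ⟨j, rfl⟩ := Nat.exists_eq_succ_of_ne_zero (n := k) (by rintro rfl; exact h0 hk)
    rw [if_pos ⟨hk, h⟩]
    refine mul_left_cancel₀ one_add_X_ne_zero ?_
    linear_combination 2 * (1 + X) * hchain + 2 * (1 - X) * one_add_X_mul_evenSeries hk
      - hletter * blockSeries a (j + 1) * peakFactor * (1 + X)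
      - blockSeries a (j + 1) * one_add_X_sq_mul_peakFactor
  · rw [if_neg fun hk' => hk hk'.1]
    linear_combination 2 * hchain + (1 - X) * two_mul_evenSeries hk - hletter * blockSeries a k

lemma fallCount_succ :
    fallCount a (k + 1) = fallCount a k + if a k ∧ ¬ a (k + 1) then 1 else 0 := by
  rw [fallCount, range_add_one, filter_insert]
  split_ifs
  · rw [card_insert_of_notMem (by simp), fallCount]
  · rfl

lemma one_sub_X_mul_blockSeries (h0 : ¬ a 0) :
    (1 - X) * blockSeries a k = 2 * letterFactor ^ k * peakFactor ^ fallCount a k := by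
  induction k with
  | zero =>
    have hblock : blockSeries a 0 = 2 * mk 1 := by
      ext l
      rw [two_mul]
      simp [blockSeries, chainCount, one_add_one_eq_two]
    rw [hblock, fallCount, range_zero, filter_empty, card_empty, pow_zero, pow_zero]
    linear_combination 2 * mk_one_mul_one_sub_eq_one ℚ
  | succ k ih =>
    rw [blockSeries_succ h0, fallCount_succ]
    split_ifs
    · linear_combination letterFactor * peakFactor * ih
    · linear_combination letterFactor * ih

theorem two_mul_chainSeries (h0 : ¬ a 0) :
    2 * chainSeries a k = letterFactor ^ (k + 2) * peakFactor ^ (fallCount a k + 1) := by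
  have hfactors : (1 - X) ^ 2 * (letterFactor ^ 2 * peakFactor) = 4 * X := by
    rw [← mul_assoc, ← mul_pow, one_sub_X_mul_letterFactor, one_add_X_sq_mul_peakFactor]
  refine mul_left_cancel₀ (pow_ne_zero 2 one_sub_X_ne_zero) ?_
  linear_combination 2 * (1 - X) * one_sub_X_mul_chainSeries a k
    + 2 * X * one_sub_X_mul_blockSeries h0 (k := k)
    - letterFactor ^ k * peakFactor ^ fallCount a k * hfactors

end EnrichedPartitions

section PeakPolynomials

open Finset hiding mk
open PowerSeries

/-- Generating function, in the number of pairs of letters, of the words compatible with `π` over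
an alphabet with alternating signs. -/
def compatibleSeries {n : ℕ} (π : Equiv.Perm (Fin n)) : ℚ⟦X⟧ :=
  mk fun m => (compatibleCount (alternatingSign m) π : ℚ)

lemma two_mul_compatibleSeries {n : ℕ} (hn : 1 ≤ n) (π : Equiv.Perm (Fin n)) :
    2 * compatibleSeries π = letterFactor ^ (n + 1) * peakFactor ^ (pk n π + 1) := by
  obtain ⟨k, rfl⟩ := Nat.exists_eq_add_of_le' hn
  have hchain : compatibleSeries π = chainSeries (IsAscent π) k := by
    ext m
    simp [compatibleSeries, chainSeries, compatibleCount_alternatingSign]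
  rw [hchain, pk_eq_fallCount, two_mul_chainSeries fun h => Nat.not_succ_le_zero 0 h.1]

lemma factorial_mul_sum_invSet_compatibleSeries {n : ℕ} (hn : 1 ≤ n) :
    (n.factorial : ℚ⟦X⟧) * ∑ π ∈ invSet n, compatibleSeries π
      = ∑ k ∈ Icc 1 n with k % 2 = n % 2,
          (cnk n k : ℚ⟦X⟧) * ∑ π : Equiv.Perm (Fin k), compatibleSeries π := by
  ext m
  simpa [compatibleSeries, ← nsmul_eq_mul] using
    factorial_mul_sum_invSet_compatibleCount (sum_alternatingSign m) hn

theorem transcendental_of_constantCoeff_eq_zero {R : Type*} [CommRing R] [IsDomain R] {f : R⟦X⟧}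
    (hf : constantCoeff f = 0) (hf0 : f ≠ 0) : Transcendental R f := by
  refine transcendental_iff.2 fun p hp => by_contra fun hp0 => ?_
  obtain ⟨q, hq, hdvd⟩ := Polynomial.exists_eq_pow_rootMultiplicity_mul_and_not_dvd p hp0 0
  rw [Polynomial.C_0, sub_zero] at hq hdvd
  rw [hq, map_mul, map_pow, Polynomial.aeval_X] at hp
  have hroot := congrArg constantCoeff ((mul_eq_zero.1 hp).resolve_left (pow_ne_zero _ hf0))
  rw [Polynomial.aeval_def, Polynomial.hom_eval₂, hf, Polynomial.eval₂_at_zero] at hroot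
  exact hdvd (Polynomial.X_dvd_iff.2 (by simpa using hroot))

lemma transcendental_peakFactor : Transcendental ℚ peakFactor := by
  refine transcendental_of_constantCoeff_eq_zero (by simp [peakFactor]) fun h => ?_
  have hX := one_add_X_sq_mul_peakFactor
  rw [h, mul_zero, eq_comm, mul_eq_zero] at hX
  exact hX.elim (fun h4 => by simpa [map_ofNat] using congrArg constantCoeff h4) X_ne_zero

lemma letterFactor_ne_zero : letterFactor ≠ 0 := fun h => by
  simpa [h] using letterFactor_sq_mul_one_sub_peakFactor

lemma letterFactor_pow_mul_one_sub_peakFactor_pow {k n : ℕ} (hkn : k ≤ n) (hmod : k % 2 = n % 2) :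
    letterFactor ^ (n + 1) * (1 - peakFactor) ^ ((n - k) / 2) = letterFactor ^ (k + 1) := by
  have hn : n + 1 = (k + 1) + 2 * ((n - k) / 2) := by omega
  nth_rw 1 [hn]
  rw [pow_add, pow_mul, mul_assoc, ← mul_pow, letterFactor_sq_mul_one_sub_peakFactor, one_pow,
    mul_one]

lemma letterFactor_pow_mul_aeval_peakFactor {n : ℕ} (hn : 1 ≤ n)
    (s : Finset (Equiv.Perm (Fin n))) :
    letterFactor ^ (n + 1)
        * Polynomial.aeval peakFactor (∑ π ∈ s, (Polynomial.X : Polynomial ℚ) ^ (pk n π + 1))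
      = 2 * ∑ π ∈ s, compatibleSeries π := by
  simp only [map_sum, map_pow, Polynomial.aeval_X, mul_sum, two_mul_compatibleSeries hn]

end PeakPolynomials

theorem stmt12 (n : ℕ) (hn : 1 ≤ n) :
    (n.factorial : Polynomial ℚ) * ∑ π ∈ invSet n, Polynomial.X ^ (pk n π + 1)
      = ∑ k ∈ (Finset.Icc 1 n).filter (fun k => k % 2 = n % 2),
          (cnk n k : Polynomial ℚ) * (1 - Polynomial.X) ^ ((n - k) / 2)
            * peakP k := by
  refine transcendental_iff_injective.1 transcendental_peakFactor
    (mul_left_cancel₀ (pow_ne_zero (n + 1) letterFactor_ne_zero) ?_)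
  calc
    _ = 2 * (n.factorial * ∑ π ∈ invSet n, compatibleSeries π) := by
      rw [map_mul, map_natCast, mul_left_comm, letterFactor_pow_mul_aeval_peakFactor hn,
        mul_left_comm]
    _ = ∑ k ∈ (Finset.Icc 1 n).filter (fun k => k % 2 = n % 2),
          cnk n k * (2 * ∑ π : Equiv.Perm (Fin k), compatibleSeries π) := by
      simp only [factorial_mul_sum_invSet_compatibleSeries hn, Finset.mul_sum, mul_left_comm]
    _ = _ := by
      rw [map_sum, Finset.mul_sum]
      refine Finset.sum_congr rfl fun k hk => ?_
      obtain ⟨hk, hmod⟩ := Finset.mem_filter.1 hk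
      obtain ⟨hk1, hkn⟩ := Finset.mem_Icc.1 hk
      rw [← letterFactor_pow_mul_aeval_peakFactor hk1,
        ← letterFactor_pow_mul_one_sub_peakFactor_pow hkn hmod, peakP]
      simp only [map_mul, map_natCast, map_pow, map_sub, map_one, Polynomial.aeval_X]
      ring

end
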